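/- arXiv:1604.07200 — 2 statements merged into one kernel-verified Lean document; each statement's English description precedes it below -/
import Mathlib

section
/- For every d ≥ 1 and every D: if the bipartite graph P_d (defined over F_2) admits a projective realization of dimension D over F_2 with intersection dimension 1, then D ≥ ⌊d/2⌋·⌈d/2⌉. In particular, the projective dimension with intersection dimension 1 of P_d over F_2 is Ω(d²). -/
/-- A projective realization of a bipartite graph over a field `F`. -/
def IsProjRealization (F : Type) [Field F] {U V : Type} (E : U → V → Prop) (D : ℕ)
    (φU : U → Submodule F (Fin D → F)) (φV : V → Submodule F (Fin D → F)) : Prop :=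
  ∀ u v, E u v ↔ φU u ⊓ φV v ≠ ⊥

/-- The edge relation of the bipartite graph `P_d` over `F_2`. -/
def PdEdge (d : ℕ) (I J : Submodule (ZMod 2) (Fin d → ZMod 2)) : Prop :=
  I ⊓ J ≠ ⊥

open scoped Classical in
theorem aux_mu (d : ℕ) : ∃ μ : Submodule (ZMod 2) (Fin d → ZMod 2) → ℚ,
    (∀ S, ∑ T with T ≤ S, μ T = if S = ⊥ then 1 else 0) := by
  let _ : LocallyFiniteOrder (Submodule (ZMod 2) (Fin d → ZMod 2)) :=
    Fintype.toLocallyFiniteOrder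
  refine ⟨fun S => IncidenceAlgebra.mu ℚ ⊥ S, fun S => ?_⟩
  have h := IncidenceAlgebra.sum_Icc_mu_right (𝕜 := ℚ)
    (⊥ : Submodule (ZMod 2) (Fin d → ZMod 2)) S
  rw [show (if S = ⊥ then (1:ℚ) else 0) = if ⊥ = S then 1 else 0 by simp only [eq_comm], ← h]
  apply Finset.sum_congr
  · ext T; simp
  · intros; rfl

open scoped Classical in
theorem aux_weisner (d : ℕ) (μ : Submodule (ZMod 2) (Fin d → ZMod 2) → ℚ)
    (hμ : ∀ S, ∑ T with T ≤ S, μ T = if S = ⊥ then 1 else 0)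
    (L : Submodule (ZMod 2) (Fin d → ZMod 2)) (hL : L ≠ ⊥)
    (S : Submodule (ZMod 2) (Fin d → ZMod 2)) (hS : L ≤ S) :
    ∑ T with T ⊔ L = S, μ T = 0 := by
  induction S using WellFoundedLT.induction with
  | ind S ih =>
    have h0 : ∑ T with T ≤ S, μ T = 0 := by
      rw [hμ, if_neg]; rintro rfl; exact hL (le_bot_iff.mp hS)
    have h1 := Finset.sum_fiberwise_of_maps_to (s := Finset.univ.filter (fun T => T ≤ S))
      (t := Finset.univ.filter (fun X => L ≤ X ∧ X ≤ S)) (g := fun T => T ⊔ L)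
      (by intro T hT; simp at hT ⊢; exact ⟨hT, hS⟩) μ
    rw [h0, Finset.sum_eq_single S] at h1
    · rw [← h1]
      apply Finset.sum_congr _ (fun _ _ => rfl)
      ext T
      simp only [Finset.mem_filter, Finset.mem_univ, true_and]
      exact ⟨fun h => ⟨h ▸ le_sup_left, h⟩, fun h => h.2⟩
    · intro X hX hne
      simp only [Finset.mem_filter, Finset.mem_univ, true_and] at hX
      rw [← ih X (lt_of_le_of_ne hX.2 hne) hX.1]
      apply Finset.sum_congr _ (fun _ _ => rfl)
      ext T
      simp only [Finset.mem_filter, Finset.mem_univ, true_and]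
      exact ⟨fun h => h.2, fun h => ⟨le_trans (h ▸ le_sup_left) hX.2, h⟩⟩
    · intro h; exact absurd (by simp [hS]) h

open scoped Classical in
theorem aux_sign (d : ℕ) (μ : Submodule (ZMod 2) (Fin d → ZMod 2) → ℚ)
    (hμ : ∀ S, ∑ T with T ≤ S, μ T = if S = ⊥ then 1 else 0)
    (S : Submodule (ZMod 2) (Fin d → ZMod 2)) :
    0 < (-1 : ℚ) ^ (Module.finrank (ZMod 2) S) * μ S := by
  induction S using WellFoundedLT.induction with
  | ind S ih =>
    by_cases hb : S = ⊥
    · subst hb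
      have := hμ ⊥
      simp [Finset.filter_eq'] at this
      simp [this]
    obtain ⟨v, hv, hv0⟩ := Submodule.exists_mem_ne_zero_of_ne_bot hb
    set L := Submodule.span (ZMod 2) {v} with hLdef
    have hLS : L ≤ S := by rw [hLdef, Submodule.span_singleton_le_iff_mem]; exact hv
    have hL1 : Module.finrank (ZMod 2) L = 1 := finrank_span_singleton hv0
    have hL : L ≠ ⊥ := by intro h; rw [h] at hL1; simp at hL1
    have hat : IsAtom L := by
      rw [hLdef]; exact nonzero_span_atom v hv0
    have hw := aux_weisner d μ hμ L hL S hLS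
    have hmem : S ∈ Finset.univ.filter (fun T => T ⊔ L = S) := by simpa using hLS
    rw [← Finset.add_sum_erase _ _ hmem] at hw
    have hkey : ∀ T ∈ (Finset.univ.filter (fun T => T ⊔ L = S)).erase S,
        T < S ∧ Module.finrank (ZMod 2) T + 1 = Module.finrank (ZMod 2) S := by
      intro T hT
      simp only [Finset.mem_erase, Finset.mem_filter, Finset.mem_univ, true_and] at hT
      obtain ⟨hne, hT⟩ := hT
      have hle : T ≤ S := hT ▸ le_sup_left
      refine ⟨lt_of_le_of_ne hle hne, ?_⟩
      have hdis : T ⊓ L = ⊥ := by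
        rcases hat.le_iff.mp (inf_le_right : T ⊓ L ≤ L) with h | h
        · exact h
        · exfalso; apply hne
          rw [← hT, sup_eq_left.mpr (inf_eq_right.mp h)]
      have := Submodule.finrank_sup_add_finrank_inf_eq T L
      rw [hT, hdis, hL1] at this
      simp at this
      omega
    have hpos : 0 < ∑ T ∈ (Finset.univ.filter (fun T => T ⊔ L = S)).erase S,
        (-1 : ℚ) ^ (Module.finrank (ZMod 2) T) * μ T := by
      apply Finset.sum_pos
      · intro T hT; exact ih T (hkey T hT).1
      · obtain ⟨C, hC⟩ := exists_isCompl L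
        refine ⟨C ⊓ S, ?_⟩
        simp only [Finset.mem_erase, Finset.mem_filter, Finset.mem_univ, true_and]
        constructor
        · intro h
          have : L ≤ C := hLS.trans (inf_eq_right.mp h)
          exact hL (le_bot_iff.mp (hC.disjoint le_rfl this))
        · rw [sup_comm, ← sup_inf_assoc_of_le C hLS, hC.sup_eq_top, top_inf_eq]
    have hrw : ∑ T ∈ (Finset.univ.filter (fun T => T ⊔ L = S)).erase S,
        (-1 : ℚ) ^ (Module.finrank (ZMod 2) T) * μ T =
        - ((-1 : ℚ) ^ (Module.finrank (ZMod 2) S) *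
        ∑ T ∈ (Finset.univ.filter (fun T => T ⊔ L = S)).erase S, μ T) := by
      rw [Finset.mul_sum, ← Finset.sum_neg_distrib]
      apply Finset.sum_congr rfl
      intro T hT
      rw [← (hkey T hT).2, pow_succ]; ring
    rw [hrw] at hpos
    rw [eq_neg_of_add_eq_zero_left hw]
    linarith

theorem aux_count (d : ℕ) :
    2 ^ (d / 2 * ((d + 1) / 2)) ≤ Nat.card (Submodule (ZMod 2) (Fin d → ZMod 2)) := by
  let e : ((Fin (d/2) → ZMod 2) × (Fin ((d+1)/2) → ZMod 2)) ≃ₗ[ZMod 2] (Fin d → ZMod 2) :=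
    LinearEquiv.ofFinrankEq _ _ (by simp; omega)
  let f : Matrix (Fin ((d+1)/2)) (Fin (d/2)) (ZMod 2) →
      Submodule (ZMod 2) (Fin d → ZMod 2) :=
    fun M => (Matrix.toLin' M).graph.map (e : _ →ₗ[ZMod 2] _)
  have hf : Function.Injective f := by
    intro M N h
    have h2 := Submodule.map_injective_of_injective e.injective h
    apply Matrix.toLin'.injective
    ext1 i
    ext1
    have : ((LinearMap.single (ZMod 2) (fun _ => ZMod 2) i 1),
      Matrix.toLin' M (LinearMap.single (ZMod 2) (fun _ => ZMod 2) i 1)) ∈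
        (Matrix.toLin' N).graph := by
      rw [← h2, LinearMap.mem_graph_iff]
    rw [LinearMap.mem_graph_iff] at this
    exact this
  have := Nat.card_le_card_of_injective f hf
  refine le_trans (le_of_eq ?_) this
  simp [Nat.card_eq_fintype_card, Matrix, ← pow_mul]

open scoped Classical in
theorem aux_inj (d : ℕ) (lam : Submodule (ZMod 2) (Fin d → ZMod 2) → ℚ)
    (hl : ∀ S, lam S ≠ 0) (c : Submodule (ZMod 2) (Fin d → ZMod 2) → ℚ)
    (h : ∀ J, ∑ I, c I * ∑ K with K ≤ I ⊓ J, lam K = 0) : c = 0 := by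
  have h1 : ∀ J, ∑ K with K ≤ J, lam K * ∑ I with K ≤ I, c I = 0 := by
    intro J
    rw [← h J]
    simp only [Finset.sum_filter, Finset.mul_sum, le_inf_iff]
    rw [← Finset.sum_comm]
    simp only [← Finset.sum_filter]
    rw [Finset.sum_filter, Finset.sum_congr rfl]
    intro K _
    split_ifs with hK
    · simp only [hK, and_true]
      apply Finset.sum_congr rfl
      intro I _
      split_ifs <;> ring
    · simp [hK]
  have h2 : ∀ J, ∑ I with J ≤ I, c I = 0 := by
    intro J
    induction J using WellFoundedLT.induction with
    | ind J ih =>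
      have := h1 J
      rw [Finset.sum_eq_single J] at this
      · exact (mul_eq_zero.mp this).resolve_left (hl J)
      · intro K hK hne
        rw [ih K (lt_of_le_of_ne (by simpa using hK) hne), mul_zero]
      · intro hh; simp at hh
  funext J
  induction J using WellFoundedGT.induction with
  | ind J ih =>
    have := h2 J
    rw [Finset.sum_eq_single J] at this
    · exact this
    · intro K hK hne
      exact ih K (lt_of_le_of_ne (by simpa using hK) hne.symm)
    · intro hh; simp at hh

open scoped Classical in
theorem aux_card (d D : ℕ)
    (φU φV : Submodule (ZMod 2) (Fin d → ZMod 2) → Submodule (ZMod 2) (Fin D → ZMod 2))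
    (hreal : IsProjRealization (ZMod 2) (PdEdge d) D φU φV)
    (hint : ∀ I J, Module.finrank (ZMod 2) ↥(φU I ⊓ φV J) ≤ 1)
    (I J : Submodule (ZMod 2) (Fin d → ZMod 2)) :
    ∑ w, (if w ∈ φU I then (1:ℚ) else 0) * (if w ∈ φV J then (1:ℚ) else 0) =
      2 - if I ⊓ J = ⊥ then 1 else 0 := by
  have h1 : ∑ w, (if w ∈ φU I then (1:ℚ) else 0) * (if w ∈ φV J then (1:ℚ) else 0) =
      (Nat.card ↥(φU I ⊓ φV J) : ℚ) := by
    rw [Nat.card_eq_fintype_card, Fintype.card_subtype, Finset.card_filter]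
    push_cast
    apply Finset.sum_congr rfl
    intro w _
    simp only [Submodule.mem_inf]
    split_ifs <;> simp_all
  have h2 := Module.natCard_eq_pow_finrank (K := ZMod 2) (V := ↥(φU I ⊓ φV J))
  have h3 := hreal I J
  unfold PdEdge at h3
  rw [h1, h2]
  have h4 := Submodule.finrank_eq_zero (R := ZMod 2) (S := φU I ⊓ φV J)
  have h5 := hint I J
  split_ifs with hb
  · have : φU I ⊓ φV J = ⊥ := by
      by_contra hc; exact (h3.mpr hc) hb
    rw [h4.mpr this]; norm_num
  · have : Module.finrank (ZMod 2) ↥(φU I ⊓ φV J) ≠ 0 := fun hc => h3.mp hb (h4.mp hc)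
    rw [show Module.finrank (ZMod 2) ↥(φU I ⊓ φV J) = 1 by omega]; norm_num

/-- Every projective realization of `P_d` over `F_2` with intersection dimension `1`
has dimension at least `⌊d/2⌋ · ⌈d/2⌉`. -/
theorem stmt_2 (d : ℕ) (hd : 1 ≤ d) (D : ℕ)
    (φU φV : Submodule (ZMod 2) (Fin d → ZMod 2) → Submodule (ZMod 2) (Fin D → ZMod 2))
    (hreal : IsProjRealization (ZMod 2) (PdEdge d) D φU φV)
    (hint : ∀ I J, Module.finrank (ZMod 2) ↥(φU I ⊓ φV J) ≤ 1) :
    d / 2 * ((d + 1) / 2) ≤ D := by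
  classical
  obtain ⟨μ, hμ⟩ := aux_mu d
  have hsign := aux_sign d μ hμ
  let lam : Submodule (ZMod 2) (Fin d → ZMod 2) → ℚ := fun K => (if K = ⊥ then 2 else 0) - μ K
  have hlam : ∀ S, lam S ≠ 0 := by
    intro S
    by_cases hS : S = ⊥
    · subst hS
      have := hμ ⊥
      simp [Finset.filter_eq'] at this
      simp [lam, this]
      norm_num
    · have := hsign S
      simp only [lam, hS, if_false]
      intro h0
      have : μ S = 0 := by linarith
      simp_all
  have hsum : ∀ S, ∑ K with K ≤ S, lam K = 2 - if S = ⊥ then 1 else 0 := by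
    intro S
    simp only [lam]
    rw [Finset.sum_sub_distrib, hμ]
    congr 1
    simp
  let Φ : (Submodule (ZMod 2) (Fin d → ZMod 2) → ℚ) →ₗ[ℚ] ((Fin D → ZMod 2) → ℚ) :=
    { toFun := fun c w => ∑ I, c I * (if w ∈ φU I then (1:ℚ) else 0)
      map_add' := by intro a b; funext w; simp only [Pi.add_apply, add_mul, Finset.sum_add_distrib]
      map_smul' := by
        intro a b; funext w
        simp only [Pi.smul_apply, smul_eq_mul, mul_assoc, Finset.mul_sum, RingHom.id_apply] }
  have hinj : Function.Injective Φ := by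
    rw [injective_iff_map_eq_zero]
    intro c hc
    apply aux_inj d lam hlam c
    intro J
    have h1 : ∑ w, Φ c w * (if w ∈ φV J then (1:ℚ) else 0) = 0 := by simp [hc]
    rw [← h1]
    simp only [Φ, LinearMap.coe_mk, AddHom.coe_mk, Finset.sum_mul]
    rw [Finset.sum_comm]
    apply Finset.sum_congr rfl
    intro I _
    rw [hsum, ← aux_card d D φU φV hreal hint I J, Finset.mul_sum]
    simp only [mul_assoc]
  have hle := LinearMap.finrank_le_finrank_of_injective hinj
  simp only [Module.finrank_fintype_fun_eq_card] at hle
  have hc := aux_count d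
  rw [Nat.card_eq_fintype_card] at hc
  have : 2 ^ (d / 2 * ((d + 1) / 2)) ≤ 2 ^ D := by
    refine hc.trans (hle.trans (le_of_eq ?_))
    simp
  exact (Nat.pow_le_pow_iff_right (by norm_num)).mp this
end

section
/- There exists an absolute constant γ > 0 such that for every d ≥ 2, every bitwise decomposable projective assignment over F_2 of dimension D for the function SI_d (viewed as a Boolean function on {0,1}^{d²} × {0,1}^{d²}, where the first d² bits encode the entries of a d×d matrix A over F_2 and the last d² bits encode the entries of a d×d matrix B over F_2) satisfies D ≥ γ · d³ / log d. In other words, bitpdim(SI_d) = Ω(d³/log d). -/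
/-- A subspace of `F_2^D` spanned by a subset of the vectors `e_k − e_l` (`k ≠ l`). -/
def IsDiffSpanned {D : ℕ} (W : Submodule (ZMod 2) (Fin D → ZMod 2)) : Prop :=
  ∃ S : Set (Fin D → ZMod 2),
    (∀ w ∈ S, ∃ k l : Fin D, k ≠ l ∧
        w = Pi.single k (1 : ZMod 2) - Pi.single l (1 : ZMod 2)) ∧
    W = Submodule.span (ZMod 2) S

/-- A bitwise decomposable projective assignment of dimension `D` over `F_2` for a
Boolean function given (as a relation `E`) on `{0,1}^ι × {0,1}^ι`. -/
def IsBitDecompAssignment {ι : Type}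
    (E : (ι → Bool) → (ι → Bool) → Prop) (D : ℕ)
    (U V : ι → Bool → Submodule (ZMod 2) (Fin D → ZMod 2)) : Prop :=
  (∀ i a, IsDiffSpanned (U i a)) ∧
  (∀ j b, IsDiffSpanned (V j b)) ∧
  (∀ x y : ι → Bool, E x y ↔ (⨆ i, U i (x i)) ⊓ (⨆ j, V j (y j)) ≠ ⊥) ∧
  (∀ S₁ S₂ : Set (ι × Bool), Disjoint S₁ S₂ →
      (⨆ p ∈ S₁, U p.1 p.2) ⊓ (⨆ p ∈ S₂, U p.1 p.2) = ⊥) ∧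
  (∀ S₁ S₂ : Set (ι × Bool), Disjoint S₁ S₂ →
      (⨆ p ∈ S₁, V p.1 p.2) ⊓ (⨆ p ∈ S₂, V p.1 p.2) = ⊥)

/-- The `d × d` matrix over `F_2` encoded by a bit vector indexed by `Fin d × Fin d`. -/
def toMat (d : ℕ) (x : Fin d × Fin d → Bool) : Matrix (Fin d) (Fin d) (ZMod 2) :=
  fun i j => if x (i, j) then 1 else 0

/-- The edge relation of `SI_d` on bit vectors: the rowspans of the encoded matrices
intersect nontrivially. -/
def SIedge (d : ℕ) (x y : Fin d × Fin d → Bool) : Prop :=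
  Submodule.span (ZMod 2) (Set.range (toMat d x)) ⊓
      Submodule.span (ZMod 2) (Set.range (toMat d y)) ≠ ⊥

lemma diff_iSup {D : ℕ} {κ : Sort*} (W : κ → Submodule (ZMod 2) (Fin D → ZMod 2))
    (h : ∀ i, IsDiffSpanned (W i)) : IsDiffSpanned (⨆ i, W i) := by
  choose S hS hW using h
  refine ⟨⋃ i, S i, ?_, ?_⟩
  · intro w hw
    obtain ⟨i, hi⟩ := Set.mem_iUnion.1 hw
    exact hS i w hi
  · rw [Submodule.span_iUnion]
    exact iSup_congr hW

lemma diff_sup {D : ℕ} {W₁ W₂ : Submodule (ZMod 2) (Fin D → ZMod 2)}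
    (h₁ : IsDiffSpanned W₁) (h₂ : IsDiffSpanned W₂) : IsDiffSpanned (W₁ ⊔ W₂) := by
  obtain ⟨S, hS, rfl⟩ := h₁
  obtain ⟨S', hS', rfl⟩ := h₂
  refine ⟨S ∪ S', ?_, (Submodule.span_union _ _).symm⟩
  rintro w (hw | hw)
  exacts [hS w hw, hS' w hw]

lemma diff_supp {D : ℕ} {W : Submodule (ZMod 2) (Fin D → ZMod 2)} (h : IsDiffSpanned W) :
    ∃ T : Finset (Fin D), T.card ≤ 2 * Module.finrank (ZMod 2) W ∧
      ∀ v ∈ W, ∀ l, l ∉ T → v l = 0 := by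
  classical
  obtain ⟨S, hS, rfl⟩ := h
  obtain ⟨b, hbS, hspan, hli⟩ := exists_linearIndependent (ZMod 2) S
  have hfin : Fintype b := Fintype.ofFinite b
  have hk : ∀ w : b, ∃ k l : Fin D, k ≠ l ∧
        (w : Fin D → ZMod 2) = Pi.single k (1 : ZMod 2) - Pi.single l (1 : ZMod 2) :=
    fun w => hS w (hbS w.2)
  choose k l hkl hw using hk
  refine ⟨Finset.univ.biUnion (fun w : b => {k w, l w}), ?_, ?_⟩
  · have h1 : Module.finrank (ZMod 2) (Submodule.span (ZMod 2) S) = Fintype.card b := by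
      rw [← hspan, finrank_span_set_eq_card hli, Set.toFinset_card]
    rw [h1, mul_comm]
    refine Finset.card_biUnion_le_card_mul _ _ _ ?_
    intro w _
    exact Finset.card_le_two
  · intro v hv i hi
    rw [← hspan] at hv
    induction hv using Submodule.span_induction with
    | mem w hwb =>
      have hi' : ¬ (i = k ⟨w, hwb⟩ ∨ i = l ⟨w, hwb⟩) := by
        intro hc
        apply hi
        rw [Finset.mem_biUnion]
        exact ⟨⟨w, hwb⟩, Finset.mem_univ _, by simpa using hc⟩
      push Not at hi'
      rw [show w = _ from hw ⟨w, hwb⟩]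
      simp [Pi.single_apply, hi'.1, hi'.2]
    | zero => rfl
    | add x y _ _ hx hy => simp [hx, hy]
    | smul a x _ hx => simp [hx]

lemma diff_transfer {D : ℕ} {W W' : Submodule (ZMod 2) (Fin D → ZMod 2)} (h : IsDiffSpanned W)
    (T : Finset (Fin D))
    (hT : ∀ s ∈ T, ∀ t ∈ T, (Pi.single s (1 : ZMod 2) - Pi.single t (1 : ZMod 2) : Fin D → ZMod 2) ∈ W →
      (Pi.single s (1 : ZMod 2) - Pi.single t (1 : ZMod 2) : Fin D → ZMod 2) ∈ W')
    (v : Fin D → ZMod 2) (hv : v ∈ W) (hvT : ∀ l, l ∉ T → v l = 0) : v ∈ W' := by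
  classical
  have hg : ∀ l : Fin D, ∃ g : Fin D → ZMod 2, (l ∈ T → g = Pi.single l 1) ∧
      ((∃ t ∈ T, g = Pi.single t 1 ∧ (Pi.single l (1 : ZMod 2) - Pi.single t (1 : ZMod 2) : Fin D → ZMod 2) ∈ W) ∨
      (g = 0 ∧ ∀ t ∈ T, (Pi.single l (1 : ZMod 2) - Pi.single t (1 : ZMod 2) : Fin D → ZMod 2) ∉ W)) := by
    intro l
    by_cases hl : l ∈ T
    · exact ⟨Pi.single l 1, fun _ => rfl, Or.inl ⟨l, hl, rfl, by simp⟩⟩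
    · by_cases hl' : ∃ t ∈ T, (Pi.single l (1 : ZMod 2) - Pi.single t (1 : ZMod 2) : Fin D → ZMod 2) ∈ W
      · obtain ⟨t, ht, htW⟩ := hl'
        exact ⟨Pi.single t 1, fun h => absurd h hl, Or.inl ⟨t, ht, rfl, htW⟩⟩
      · push Not at hl'
        exact ⟨0, fun h => absurd h hl, Or.inr ⟨rfl, hl'⟩⟩
  choose g hgT hgW using hg
  have key : ∀ k l : Fin D, (Pi.single k (1 : ZMod 2) - Pi.single l (1 : ZMod 2) : Fin D → ZMod 2) ∈ W →
      g k - g l ∈ W' := by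
    intro k l hkl
    rcases hgW k with ⟨t, ht, hgt, htW⟩ | ⟨hk0, hk⟩ <;>
    rcases hgW l with ⟨s, hs, hgs, hsW⟩ | ⟨hl0, hl⟩
    · rw [hgt, hgs]
      apply hT t ht s hs
      have := W.add_mem (W.sub_mem hkl htW) hsW
      convert this using 1
      abel
    · exfalso
      apply hl t ht
      have := W.sub_mem htW hkl
      convert this using 1
      abel
    · exfalso
      apply hk s hs
      have := W.add_mem hsW hkl
      convert this using 1
      abel
    · rw [hk0, hl0]; simp
  have hle : W ≤ W'.comap (Fintype.linearCombination (ZMod 2) g) := by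
    obtain ⟨S, hS, rfl⟩ := h
    rw [Submodule.span_le]
    intro w hw
    obtain ⟨k, l, -, rfl⟩ := hS w hw
    have := key k l (Submodule.subset_span hw)
    simpa [Submodule.mem_comap] using this
  have h2 : Fintype.linearCombination (ZMod 2) g v = v := by
    rw [Fintype.linearCombination_apply]
    conv_rhs => rw [pi_eq_sum_univ' v]
    apply Finset.sum_congr rfl
    intro l _
    by_cases hl : l ∈ T
    · rw [hgT l hl]
    · simp [hvT l hl]
  have := hle hv
  rw [Submodule.mem_comap, h2] at this
  exact this

lemma card_setoid {α : Type*} [Fintype α] {D : ℕ} (T : Finset (Fin D)) (r : α → Setoid T)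
    (hr : Function.Injective r) : Fintype.card α ≤ T.card ^ T.card := by
  classical
  have : Function.Injective (fun (a : α) (t : T) => (Quotient.mk (r a) t).out) := by
    intro a b hab
    apply hr
    ext s t
    have hs := congrFun hab s
    have ht := congrFun hab t
    simp only at hs ht
    constructor
    · intro h
      have h1 : (Quotient.mk (r a) s) = Quotient.mk (r a) t := Quotient.sound h
      rw [h1, ht] at hs
      exact (r b).symm' (Quotient.exact (Quotient.out_injective hs))
    · intro h
      have h1 : (Quotient.mk (r b) s) = Quotient.mk (r b) t := Quotient.sound h
      rw [h1, ← ht] at hs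
      exact Quotient.exact (Quotient.out_injective hs)
  have h2 := Fintype.card_le_of_injective _ this
  simpa using h2

def relOn {D : ℕ} (W : Submodule (ZMod 2) (Fin D → ZMod 2)) (T : Finset (Fin D)) : Setoid T where
  r s t := (Pi.single s.1 (1 : ZMod 2) - Pi.single t.1 (1 : ZMod 2) : Fin D → ZMod 2) ∈ W
  iseqv := by
    refine ⟨?_, ?_, ?_⟩
    · intro s; simp
    · intro s t h
      have := W.neg_mem h
      simpa using this
    · intro s t u h1 h2
      have := W.add_mem h1 h2
      simpa using this

lemma relOn_eq {D : ℕ} {W W' : Submodule (ZMod 2) (Fin D → ZMod 2)} (h : IsDiffSpanned W)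
    (T : Finset (Fin D)) (hrel : relOn W T = relOn W' T)
    (v : Fin D → ZMod 2) (hv : v ∈ W) (hvT : ∀ l, l ∉ T → v l = 0) : v ∈ W' := by
  refine diff_transfer h T ?_ v hv hvT
  intro s hs t ht hst
  have h1 : (relOn W T) ⟨s, hs⟩ ⟨t, ht⟩ := hst
  rw [hrel] at h1
  exact h1

lemma meet_iff {E : Type*} [AddCommGroup E] [Module (ZMod 2) E] (A R Q : Submodule (ZMod 2) E)
    (hAR : A ⊓ R = ⊥) (hRQ : R ⊓ Q = ⊥) : (A ⊔ R) ⊓ Q ≠ ⊥ ↔ A ⊓ (R ⊔ Q) ≠ ⊥ := by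
  rw [not_iff_not]
  constructor
  · intro h
    rw [eq_bot_iff] at *
    rintro a ⟨ha, hrq⟩
    obtain ⟨r, hr, q, hq, rfl⟩ := Submodule.mem_sup.1 hrq
    have h1 : q ∈ (A ⊔ R) ⊓ Q := by
      refine ⟨?_, hq⟩
      have := Submodule.sub_mem (A ⊔ R) (Submodule.mem_sup_left ha) (Submodule.mem_sup_right (S := A) hr)
      simpa using this
    have h2 : q = 0 := by simpa using h h1
    subst h2
    apply hAR
    exact ⟨ha, by simpa using hr⟩
  · intro h
    rw [eq_bot_iff] at *
    rintro q ⟨har, hq⟩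
    obtain ⟨a, ha, r, hr, rfl⟩ := Submodule.mem_sup.1 har
    have h1 : a ∈ A ⊓ (R ⊔ Q) := by
      refine ⟨ha, ?_⟩
      have := Submodule.sub_mem (R ⊔ Q) (Submodule.mem_sup_right (S := R) hq) (Submodule.mem_sup_left hr)
      simpa using this
    have h2 : a = 0 := by simpa using h h1
    subst h2
    apply hRQ
    exact ⟨by simpa using hr, hq⟩

/-- Matrix with a single possibly nonzero row. -/
def rowX (d : ℕ) (r : Fin d) (a : Fin d → Bool) : Fin d × Fin d → Bool :=
  fun p => if p.1 = r then a p.2 else false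

def bv {d : ℕ} (a : Fin d → Bool) : Fin d → ZMod 2 := fun j => if a j then 1 else 0

lemma span_rowX (d : ℕ) (r : Fin d) (a : Fin d → Bool) :
    Submodule.span (ZMod 2) (Set.range (toMat d (rowX d r a))) =
      Submodule.span (ZMod 2) {bv a} := by
  apply le_antisymm
  · rw [Submodule.span_le]
    rintro _ ⟨i, rfl⟩
    by_cases hi : i = r
    · apply Submodule.subset_span
      subst hi
      simp only [Set.mem_singleton_iff]
      funext j
      simp [toMat, rowX, bv]
    · have : toMat d (rowX d r a) i = 0 := by
        funext j
        simp [toMat, rowX, hi]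
      rw [this]; exact Submodule.zero_mem _
  · rw [Submodule.span_le]
    rintro _ rfl
    apply Submodule.subset_span
    refine ⟨r, ?_⟩
    funext j
    simp [toMat, rowX, bv]

lemma edge_rowX (d : ℕ) (r : Fin d) (a : Fin d → Bool) (y : Fin d × Fin d → Bool) :
    SIedge d (rowX d r a) y ↔
      (bv a ≠ 0 ∧ bv a ∈ Submodule.span (ZMod 2) (Set.range (toMat d y))) := by
  unfold SIedge
  rw [span_rowX, Submodule.ne_bot_iff]
  constructor
  · rintro ⟨v, ⟨hv, hvB⟩, hv0⟩
    obtain ⟨c, rfl⟩ := Submodule.mem_span_singleton.1 hv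
    have hc : c = 0 ∨ c = 1 := by
      clear hv hvB hv0
      revert c; decide
    rcases hc with rfl | rfl
    · simp at hv0
    · rw [one_smul] at hv0 hvB
      exact ⟨hv0, hvB⟩
  · rintro ⟨h0, hB⟩
    exact ⟨bv a, ⟨Submodule.mem_span_singleton_self _, hB⟩, h0⟩

/-- The family of matrices `(I | M)`. -/
def famY (d k : ℕ) (M : {i : Fin d // i.1 < k} × {j : Fin d // ¬ j.1 < k} → Bool) :
    Fin d × Fin d → Bool :=
  fun p => if hi : p.1.1 < k then
    (if hj : p.2.1 < k then decide (p.1 = p.2) else M (⟨p.1, hi⟩, ⟨p.2, hj⟩)) else false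

lemma famY_span (d k : ℕ) (M : {i : Fin d // i.1 < k} × {j : Fin d // ¬ j.1 < k} → Bool)
    (v : Fin d → ZMod 2) (hv : v ∈ Submodule.span (ZMod 2) (Set.range (toMat d (famY d k M))))
    (j : {j : Fin d // ¬ j.1 < k}) :
    v j.1 = ∑ i : {i : Fin d // i.1 < k}, v i.1 * (if M (i, j) then 1 else 0) := by
  induction hv using Submodule.span_induction with
  | mem w hw =>
    obtain ⟨r, rfl⟩ := hw
    by_cases hr : r.1 < k
    · rw [Finset.sum_eq_single ⟨r, hr⟩]
      · have hj := j.2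
        simp [toMat, famY, hr, hj]
      · intro b _ hb
        have : ¬ (r = b.1) := by
          intro h; apply hb; ext; simp [h]
        simp [toMat, famY, hr, b.2, this]
      · simp
    · simp [toMat, famY, hr]
  | zero => simp
  | add x y _ _ hx hy => simp only [Pi.add_apply, hx, hy, add_mul, Finset.sum_add_distrib]
  | smul a x _ hx => simp [hx, Finset.mul_sum, mul_assoc]

lemma famY_sep (d k : ℕ) (M M' : {i : Fin d // i.1 < k} × {j : Fin d // ¬ j.1 < k} → Bool)
    (r : Fin d)
    (h : ∀ a, SIedge d (rowX d r a) (famY d k M) → SIedge d (rowX d r a) (famY d k M')) :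
    M = M' := by
  funext ⟨i, j⟩
  have h1 := h (fun l => famY d k M (i.1, l))
  rw [edge_rowX, edge_rowX] at h1
  have hb : bv (fun l => famY d k M (i.1, l)) = toMat d (famY d k M) i.1 := by
    funext l; simp [bv, toMat]
  rw [hb] at h1
  have h2 := (h1 ⟨?_, Submodule.subset_span ⟨i.1, rfl⟩⟩).2
  · have h3 := famY_span d k M' _ h2 j
    rw [Finset.sum_eq_single i] at h3
    · have hi := i.2
      have hj := j.2
      simp [toMat, famY, hi, hj] at h3
      revert h3
      cases M (i, j) <;> cases M' (i, j) <;> simp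
    · intro b _ hb
      have : ¬ (i.1 = b.1) := by
        intro h; apply hb; ext; simp [h]
      simp [toMat, famY, i.2, b.2, this]
    · simp
  · intro h0
    have := congrFun h0 i.1
    simp [toMat, famY, i.2] at this

def blk {d D : ℕ} (U : Fin d × Fin d → Bool → Submodule (ZMod 2) (Fin D → ZMod 2)) (r : Fin d) :
    Submodule (ZMod 2) (Fin D → ZMod 2) :=
  ⨆ p ∈ {p : (Fin d × Fin d) × Bool | p.1.1 = r}, U p.1 p.2

lemma block_bound {d D : ℕ} (hd : 2 ≤ d) (U V : Fin d × Fin d → Bool → Submodule (ZMod 2) (Fin D → ZMod 2))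
    (h : IsBitDecompAssignment (SIedge d) D U V) (r : Fin d) :
    2 ^ ((d / 2) * (d - d / 2)) ≤ (2 * Module.finrank (ZMod 2) (blk U r)) ^
      (2 * Module.finrank (ZMod 2) (blk U r)) := by
  classical
  obtain ⟨hU, hV, hE, hUi, -⟩ := h
  have hZ : IsDiffSpanned (blk U r) := diff_iSup _ fun p => diff_iSup _ fun _ => hU _ _
  obtain ⟨T, hTc, hT⟩ := diff_supp hZ
  set R : Submodule (ZMod 2) (Fin D → ZMod 2) :=
    ⨆ p ∈ {p : (Fin d × Fin d) × Bool | p.1.1 ≠ r ∧ p.2 = false}, U p.1 p.2 with hR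
  have hZR : blk U r ⊓ R = ⊥ := by
    apply hUi
    rw [Set.disjoint_left]
    intro p h1 h2
    exact h2.1 h1
  set A : (Fin d → Bool) → Submodule (ZMod 2) (Fin D → ZMod 2) := fun a => ⨆ j, U (r, j) (a j) with hA
  have hAZ : ∀ a, A a ≤ blk U r := by
    intro a
    apply iSup_le
    intro j
    exact le_iSup₂_of_le ((r, j), a j) rfl le_rfl
  have hAR : ∀ a, ⨆ i, U i (rowX d r a i) = A a ⊔ R := by
    intro a
    apply le_antisymm
    · apply iSup_le
      rintro ⟨i, j⟩
      by_cases hi : i = r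
      · subst hi
        refine le_sup_of_le_left ?_
        simp only [rowX, if_true]
        exact le_iSup (fun j => U (i, j) (a j)) j
      · refine le_sup_of_le_right ?_
        simp only [rowX, hi, if_false]
        exact le_iSup₂_of_le ((i, j), false) ⟨hi, rfl⟩ le_rfl
    · apply sup_le
      · apply iSup_le
        intro j
        refine le_trans ?_ (le_iSup _ (r, j))
        simp [rowX]
      · apply iSup₂_le
        rintro ⟨i, b⟩ ⟨h1, h2⟩
        simp only at h1 h2
        refine le_trans ?_ (le_iSup _ i)
        simp [rowX, h1, h2]
  set Q : (Fin d × Fin d → Bool) → Submodule (ZMod 2) (Fin D → ZMod 2) := fun y => ⨆ j, V j (y j) with hQ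
  have hRQ : ∀ y, R ⊓ Q y = ⊥ := by
    intro y
    have h0 : ¬ SIedge d (rowX d r fun _ => false) y := by
      rw [edge_rowX]
      rintro ⟨h1, -⟩
      apply h1
      funext j; simp [bv]
    rw [hE, hAR, not_not] at h0
    rw [eq_bot_iff, ← h0]
    exact inf_le_inf_right _ le_sup_right
  have hedge : ∀ a y, SIedge d (rowX d r a) y ↔ A a ⊓ (R ⊔ Q y) ≠ ⊥ := by
    intro a y
    rw [hE, hAR]
    apply meet_iff _ _ _ _ (hRQ y)
    rw [eq_bot_iff, ← hZR]
    exact inf_le_inf_right _ (hAZ a)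
  have hRd : IsDiffSpanned R := diff_iSup _ fun p => diff_iSup _ fun _ => hU _ _
  have hW : ∀ y, IsDiffSpanned (R ⊔ Q y) := fun y =>
    diff_sup hRd (diff_iSup _ fun j => hV _ _)
  have hinj : Function.Injective (fun M => relOn (R ⊔ Q (famY d (d/2) M)) T) := by
    intro M M' hMM
    apply famY_sep d (d/2) M M' r
    intro a ha
    rw [hedge, Submodule.ne_bot_iff] at ha ⊢
    obtain ⟨v, ⟨hvA, hvW⟩, hv0⟩ := ha
    exact ⟨v, ⟨hvA, relOn_eq (hW _) T hMM v hvW (hT v (hAZ a hvA))⟩, hv0⟩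
  have hcard := card_setoid T _ hinj
  have hc1 : Fintype.card {i : Fin d // i.1 < d / 2} = d / 2 := by
    rw [Fintype.card_subtype]
    rw [Fin.card_filter_val_lt]; omega
  have hc2 : Fintype.card {i : Fin d // ¬ i.1 < d / 2} = d - d / 2 := by
    rw [Fintype.card_subtype_compl, hc1]; simp
  rw [Fintype.card_fun, Fintype.card_prod, hc1, hc2, Fintype.card_bool] at hcard
  refine hcard.trans ?_
  rcases Nat.eq_zero_or_pos T.card with h0 | h0
  · rw [h0] at hcard ⊢
    exfalso
    have hp : 0 < d / 2 * (d - d / 2) := Nat.mul_pos (by omega) (by omega)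
    have := Nat.one_lt_two_pow hp.ne'
    simp at hcard
    omega
  · exact (Nat.pow_le_pow_left hTc _).trans (Nat.pow_le_pow_right (by omega) hTc)

lemma sum_blk {d D : ℕ} (U V : Fin d × Fin d → Bool → Submodule (ZMod 2) (Fin D → ZMod 2))
    (h : IsBitDecompAssignment (SIedge d) D U V) :
    ∑ r, Module.finrank (ZMod 2) (blk U r) ≤ D := by
  classical
  obtain ⟨-, -, -, hUi, -⟩ := h
  have hind : iSupIndep (blk U) := by
    intro r
    rw [disjoint_iff, eq_bot_iff,
      ← hUi {p | p.1.1 = r} {p | p.1.1 ≠ r} (by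
        rw [Set.disjoint_left]; intro p h1 h2; exact h2 h1)]
    refine inf_le_inf_left _ ?_
    apply iSup₂_le
    intro s hs
    apply iSup₂_le
    intro p hp
    refine le_iSup₂_of_le p ?_ le_rfl
    change p.1.1 ≠ r
    rw [show p.1.1 = s from hp]; exact hs
  have hinj := hind.dfinsupp_lsum_injective
  have := LinearMap.finrank_le_finrank_of_injective hinj
  rw [Module.finrank_fin_fun] at this
  refine le_trans (le_of_eq ?_) this
  exact (Module.finrank_directSum (R := ZMod 2) (fun r => blk U r)).symm

/-- `bitpdim(SI_d) = Ω(d³ / log d)`: there is an absolute constant `γ > 0` such that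
for every `d ≥ 2`, every bitwise decomposable projective assignment over `F_2` of
dimension `D` for `SI_d` satisfies `D ≥ γ · d³ / log d` (log base 2). -/
theorem stmt_18 : ∃ γ : ℝ, 0 < γ ∧
    ∀ d : ℕ, 2 ≤ d →
    ∀ (D : ℕ) (U V : Fin d × Fin d → Bool → Submodule (ZMod 2) (Fin D → ZMod 2)),
      IsBitDecompAssignment (SIedge d) D U V →
      γ * (d : ℝ) ^ 3 / Real.logb 2 d ≤ D := by
  refine ⟨1 / 32, by norm_num, ?_⟩
  intro d hd D U V h
  have hsum := sum_blk U V h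
  obtain ⟨r, hr⟩ : ∃ r : Fin d, d * Module.finrank (ZMod 2) (blk U r) ≤ D := by
    by_contra! hcon
    have : Nonempty (Fin d) := ⟨⟨0, by omega⟩⟩
    have h1 : ∑ r : Fin d, D < ∑ r : Fin d, d * Module.finrank (ZMod 2) (blk U r) :=
      Finset.sum_lt_sum_of_nonempty Finset.univ_nonempty (fun r _ => hcon r)
    rw [← Finset.mul_sum] at h1
    simp only [Finset.sum_const, Finset.card_univ, Fintype.card_fin, smul_eq_mul] at h1
    exact absurd (Nat.mul_le_mul_left d hsum) (not_le.2 h1)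
  have hb := block_bound hd U V h r
  generalize Module.finrank (ZMod 2) (blk U r) = s at hb hr
  have hk : d ^ 2 ≤ 8 * (d / 2 * (d - d / 2)) := by
    obtain ⟨k, hk | hk⟩ : ∃ k, d = 2 * k ∨ d = 2 * k + 1 := ⟨d / 2, by omega⟩
    · have h1 : d / 2 = k := by omega
      have h2 : d - d / 2 = k := by omega
      rw [h2, h1, hk]; nlinarith
    · have h1 : d / 2 = k := by omega
      have h2 : d - d / 2 = k + 1 := by omega
      have h3 : 1 ≤ k := by omega
      rw [h2, h1, hk]; nlinarith
  have hs : 0 < s := by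
    rcases Nat.eq_zero_or_pos s with rfl | h0
    · exfalso
      have hp : 0 < d / 2 * (d - d / 2) := Nat.mul_pos (by omega) (by omega)
      have := Nat.one_lt_two_pow hp.ne'
      simp at hb
      omega
    · exact h0
  generalize d / 2 * (d - d / 2) = m at hb hk
  have hdR : (2 : ℝ) ≤ d := by exact_mod_cast hd
  have hsR : (1 : ℝ) ≤ s := by exact_mod_cast hs
  have hrR : (d : ℝ) * s ≤ D := by exact_mod_cast hr
  have hkR : (d : ℝ) ^ 2 ≤ 8 * m := by exact_mod_cast hk
  have hlog : 1 ≤ Real.logb 2 d := by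
    rw [Real.le_logb_iff_rpow_le (by norm_num) (by linarith)]
    simpa using hdR
  have hbR : (m : ℝ) ≤ (2 * s) * Real.logb 2 (2 * s) := by
    have h1 : (2 : ℝ) ^ m ≤ (2 * s : ℝ) ^ (2 * s) := by exact_mod_cast hb
    have h2 := Real.logb_le_logb_of_le (b := 2) (by norm_num) (by positivity) h1
    rw [Real.logb_pow, Real.logb_pow, Real.logb_self_eq_one (by norm_num)] at h2
    push_cast at h2
    linarith
  rw [div_le_iff₀ (by linarith)]
  have hD0 : (0 : ℝ) ≤ D := Nat.cast_nonneg _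
  rcases le_total ((d : ℝ) ^ 2) (2 * s) with hc | hc
  · have h1 : (d : ℝ) * d ^ 2 ≤ d * (2 * s) := by gcongr
    nlinarith
  · have h1 : Real.logb 2 (2 * s) ≤ 2 * Real.logb 2 d := by
      have := Real.logb_le_logb_of_le (b := 2) (by norm_num) (by positivity) hc
      rw [Real.logb_pow] at this
      exact_mod_cast this
    have h2 : (2 * s : ℝ) * Real.logb 2 (2 * s) ≤ (2 * s) * (2 * Real.logb 2 d) := by gcongr
    have h3 : (d : ℝ) ^ 2 ≤ 32 * (s * Real.logb 2 d) := by linarith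
    have h4 : (d : ℝ) * d ^ 2 ≤ d * (32 * (s * Real.logb 2 d)) := by gcongr
    have h5 : (d : ℝ) * s * Real.logb 2 d ≤ D * Real.logb 2 d := by gcongr
    nlinarith
end
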